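/- arXiv:2604.00771 — 2 statements merged into one kernel-verified Lean document; each statement's English description precedes it below -/
import Mathlib

section
/- For all ordinals α: (1) ψ₁(α) < Ω₂; (2) ψ₁(0) = Ω; (3) if α ∈ C₁(α) then ψ₁(α+1) = ψ₁(α)·ω; (4) if α ∈ C₁(α) and α < Ω₂ then ψ₁(α) = ω^(Ω+α); (5) ψ₁(Ω₂) = ε_(Ω+1); (6) an ordinal β satisfies β < ψ₁(α) if and only if β ∈ C₁(α) and β < Ω₂. -/
noncomputable section

open Ordinal Cardinal

/-- `Ω` : the least uncountable ordinal. -/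
def Omega1 : Ordinal := (Cardinal.aleph 1).ord

/-- `Ω₂` : the least ordinal of cardinality `ℵ₂`. -/
def Omega2 : Ordinal := (Cardinal.aleph 2).ord

/-- An ordinal is additive principal if it is nonzero and closed under addition
of strictly smaller ordinals. -/
def AddPrincipal (γ : Ordinal) : Prop :=
  γ ≠ 0 ∧ ∀ ξ η : Ordinal, ξ < γ → η < γ → ξ + η < γ

/-- `ψ₂ β := ω ^ (Ω₂ + β)`. -/
def psi2 (β : Ordinal) : Ordinal := omega0 ^ (Omega2 + β)

/-- `C₁(α)` : the least set of ordinals containing all ordinals `< Ω`, closed under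
`ψ₂`, closed under sums of additive principal members, and containing
`ψ₁ β = min {γ | γ ∉ C₁(β)}` for every `β ∈ C₁(α)` with `β < α` and `β ∈ C₁(β)`. -/
def C1 (α : Ordinal) : Set Ordinal :=
  ⋂₀ {S : Set Ordinal |
      (∀ β < Omega1, β ∈ S) ∧
      (∀ β ∈ S, psi2 β ∈ S) ∧
      (∀ l : List Ordinal, l ≠ [] → (∀ b ∈ l, b ∈ S ∧ AddPrincipal b) → l.sum ∈ S) ∧
      (∀ β, β ∈ S → β < α → β ∈ C1 β → sInf {γ : Ordinal | γ ∉ C1 β} ∈ S)}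
termination_by α
decreasing_by all_goals assumption

/-- The collapsing function `ψ₁`. -/
def psi1 (α : Ordinal) : Ordinal := sInf {γ : Ordinal | γ ∉ C1 α}

/-!
By a cardinality count `ψ₁ α < Ω₂`, and `ψ₁ α` is additive principal since `C₁(α)` contains the sums
of its additive principal members. An ordinal below `Ω₂` enters `C₁(α)` only as an ordinal below
`Ω`, as a sum of members below `Ω₂`, or as a value `ψ₁ β < ψ₁ α`; hence `C₁(α) ∩ Ω₂ = ψ₁ α`, and
`ψ₁ α` is the least additive principal ordinal that is at least `Ω` and exceeds all `ψ₁ β` with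
`β < α` and `β ∈ C₁(β)`.

As long as `β < ψ₁ β`, i.e. `β ∈ C₁(β)`, the function `ψ₁` passes to the next power of `ω` at each
step, so it agrees with `β ↦ ω ^ (Ω + β)`. Once `ψ₁ β ≤ β < Ω₂`, it is constant up to `Ω₂`: the
arguments below `Ω₂` that are still available are below `ψ₁ β ≤ β`, so their values are below
`ψ₁ β`. The first such `β` is the first fixed point of `β ↦ ω ^ (Ω + β)`, which is `ε_(Ω+1)`.
-/

open FirstOrder Language.Substructure in
theorem exists_superset_closed_mk_le {ι X : Type*} [Countable ι] (f : ι → List X → X)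
    (s : Set X) :
    ∃ t : Set X, s ⊆ t ∧ (∀ i l, (∀ x ∈ l, x ∈ t) → f i l ∈ t) ∧ #t ≤ max ℵ₀ #s := by
  -- `t` is the substructure generated by `s`, `f i` interpreting a function symbol of each arity.
  let L : Language := ⟨fun _ => ι, fun _ => Empty⟩
  let : L.Structure X := { funMap := fun i v => f i (List.ofFn v), RelMap := Empty.elim }
  refine ⟨closure L s, subset_closure, fun i l hl => ?_, ?_⟩
  · have hfun : f i (List.ofFn l.get) ∈ closure L s :=
      (closure L s).fun_mem (n := l.length) i l.get fun j => hl _ (l.get_mem j)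
    rwa [List.ofFn_get] at hfun
  · have : Countable (Σ n, L.Functions n) := inferInstanceAs (Countable (Σ _ : ℕ, ι))
    have hfun : Cardinal.lift #(Σ n, L.Functions n) ≤ ℵ₀ := lift_le_aleph0.2 mk_le_aleph0
    refine Cardinal.lift_le.1 (lift_card_closure_le.trans ?_)
    grw [hfun, add_le_max]
    simp only [lift_max, lift_aleph0, max_le_iff, le_max_left, le_max_right, and_self]

theorem AddPrincipal.sum_lt {γ : Ordinal} (hγ : AddPrincipal γ) {l : List Ordinal}
    (hl : ∀ b ∈ l, b < γ) : l.sum < γ := by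
  induction l with
  | nil => exact pos_iff_ne_zero.2 hγ.1
  | cons a l ih =>
    rw [List.forall_mem_cons] at hl
    exact hγ.2 _ _ hl.1 (ih hl.2)

theorem addPrincipal_omega0_opow (δ : Ordinal) : AddPrincipal (ω ^ δ) :=
  ⟨(opow_pos δ omega0_pos).ne', fun _ _ hξ hη => isPrincipal_add_omega0_opow δ hξ hη⟩

theorem AddPrincipal.exists_omega0_opow_eq {γ : Ordinal} (hγ : AddPrincipal γ) :
    ∃ δ : Ordinal, ω ^ δ = γ :=
  (isPrincipal_add_iff_zero_or_omega0_opow.1 fun ξ η => hγ.2 ξ η).resolve_left hγ.1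

theorem AddPrincipal.mul_omega0 {γ : Ordinal} (hγ : AddPrincipal γ) : AddPrincipal (γ * ω) := by
  obtain ⟨δ, rfl⟩ := hγ.exists_omega0_opow_eq
  rw [← opow_add_one]
  exact addPrincipal_omega0_opow _

theorem AddPrincipal.mul_omega0_le {γ ξ : Ordinal} (hγ : AddPrincipal γ) (hξ : ξ < γ) :
    ξ * ω ≤ γ := by
  rw [mul_le_iff_of_isSuccLimit isSuccLimit_omega0]
  intro x hx
  obtain ⟨n, rfl⟩ := lt_omega0.1 hx
  exact (IsPrincipal.mul_natCast_lt (fun ξ η => hγ.2 ξ η) hξ n).le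

theorem exists_list_addPrincipal_sum_eq (ξ : Ordinal) :
    ∃ l : List Ordinal, (∀ b ∈ l, AddPrincipal b) ∧ l.sum = ξ := by
  induction ξ using WellFoundedLT.induction with
  | ind ξ ih =>
    rcases eq_or_ne ξ 0 with rfl | hξ
    · exact ⟨[], by simp⟩
    · obtain ⟨l, hl, hsum⟩ := ih _ (sub_omega0_opow_log_lt hξ)
      refine ⟨ω ^ log ω ξ :: l, List.forall_mem_cons.2 ⟨addPrincipal_omega0_opow _, hl⟩, ?_⟩
      rw [List.sum_cons, hsum, Ordinal.add_sub_cancel_of_le (opow_log_le_self ω hξ)]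

theorem omega0_opow_ord {c : Cardinal} (hc : ℵ₀ < c) : ω ^ c.ord = c.ord := by
  apply op_eq_self_of_isPrincipal (op := (· ^ ·)) (a := ω)
  · rwa [← ord_aleph0, ord_lt_ord]
  · exact isNormal_opow one_lt_omega0
  · exact isPrincipal_opow_ord hc.le
  · exact isSuccLimit_ord hc.le

theorem omega0_opow_add_eq_iff {a x : Ordinal} : ω ^ (a + x) = x ↔ a < x ∧ ω ^ x = x := by
  constructor
  · intro h
    have hx : 0 < x := h ▸ opow_pos _ omega0_pos
    have hax : a + x ≤ x := (right_le_opow _ one_lt_omega0).trans h.le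
    refine ⟨(lt_add_of_pos_right a hx).trans_le hax, ?_⟩
    rwa [hax.antisymm le_add_self] at h
  · rintro ⟨hax, hx⟩
    have hadd : a + x = x := by simpa only [hx] using add_omega0_opow (hax.trans_eq hx.symm)
    rw [hadd, hx]

theorem omega0_opow_Omega1 : ω ^ Omega1 = Omega1 := omega0_opow_ord (by simp)

theorem omega0_opow_Omega2 : ω ^ Omega2 = Omega2 := omega0_opow_ord (by simp)

theorem addPrincipal_Omega1 : AddPrincipal Omega1 :=
  omega0_opow_Omega1 ▸ addPrincipal_omega0_opow Omega1

theorem Omega1_pos : 0 < Omega1 :=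
  pos_iff_ne_zero.2 addPrincipal_Omega1.1

theorem Omega1_lt_Omega2 : Omega1 < Omega2 :=
  ord_lt_ord.2 (aleph_lt_aleph.2 one_lt_two)

theorem Omega2_le_psi2 (β : Ordinal) : Omega2 ≤ psi2 β :=
  le_self_add.trans (right_le_opow _ one_lt_omega0)

/-- `S` satisfies the closure conditions of which `C1 α` is the least solution. -/
structure IsC1Closed (α : Ordinal) (S : Set Ordinal) : Prop where
  mem_of_lt_Omega1 : ∀ β < Omega1, β ∈ S
  psi2_mem : ∀ β ∈ S, psi2 β ∈ S
  sum_mem : ∀ l : List Ordinal, l ≠ [] → (∀ b ∈ l, b ∈ S ∧ AddPrincipal b) → l.sum ∈ S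
  psi1_mem : ∀ β ∈ S, β < α → β ∈ C1 β → psi1 β ∈ S

theorem mem_C1_iff {α x : Ordinal} : x ∈ C1 α ↔ ∀ S, IsC1Closed α S → x ∈ S := by
  rw [C1, Set.mem_sInter]
  exact ⟨fun h S hS => h S ⟨hS.1, hS.2, hS.3, hS.4⟩, fun h S ⟨h₁, h₂, h₃, h₄⟩ =>
    h S ⟨h₁, h₂, h₃, h₄⟩⟩

theorem IsC1Closed.C1_subset {α : Ordinal} {S : Set Ordinal} (hS : IsC1Closed α S) : C1 α ⊆ S :=
  fun _ hx => mem_C1_iff.1 hx S hS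

theorem isC1Closed_C1 (α : Ordinal) : IsC1Closed α (C1 α) where
  mem_of_lt_Omega1 β hβ := mem_C1_iff.2 fun _ hS => hS.mem_of_lt_Omega1 β hβ
  psi2_mem β hβ := mem_C1_iff.2 fun _ hS => hS.psi2_mem β (hS.C1_subset hβ)
  sum_mem l hne hl := mem_C1_iff.2 fun _ hS =>
    hS.sum_mem l hne fun b hb => ⟨hS.C1_subset (hl b hb).1, (hl b hb).2⟩
  psi1_mem β hβ hβα hββ := mem_C1_iff.2 fun _ hS => hS.psi1_mem β (hS.C1_subset hβ) hβα hββ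

theorem C1_mono : Monotone C1 := fun _ β hαβ =>
  have hβ := isC1Closed_C1 β
  IsC1Closed.C1_subset ⟨hβ.mem_of_lt_Omega1, hβ.psi2_mem, hβ.sum_mem,
    fun γ hγ hγα => hβ.psi1_mem γ hγ (hγα.trans_le hαβ)⟩

theorem mk_C1_le (α : Ordinal) : #(C1 α) ≤ ℵ₁ := by
  -- Precomposing with `List.sum` turns all three generation rules into operations on lists.
  obtain ⟨t, hΩ, ht, hcard⟩ := exists_superset_closed_mk_le
    (fun (i : Fin 3) (l : List Ordinal) => ![l.sum, psi2 l.sum, psi1 l.sum] i) (Set.Iio Omega1)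
  have hsub : C1 α ⊆ t := IsC1Closed.C1_subset
    { mem_of_lt_Omega1 := fun _ hβ => hΩ hβ
      psi2_mem := fun β hβ => by simpa using ht 1 [β] (by simpa using hβ)
      sum_mem := fun l _ hl => ht 0 l fun b hb => (hl b hb).1
      psi1_mem := fun β hβ _ _ => by simpa using ht 2 [β] (by simpa using hβ) }
  have hΩ₁ : #(Set.Iio Omega1) = ℵ₁ := by
    rw [Cardinal.mk_Iio_ordinal, Omega1, card_ord, lift_aleph, Ordinal.lift_one]
  calc #(C1 α) ≤ #t := mk_le_mk_of_subset hsub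
    _ ≤ max ℵ₀ #(Set.Iio Omega1) := hcard
    _ = ℵ₁ := by rw [hΩ₁, max_eq_right (aleph0_le_aleph 1)]

theorem exists_lt_Omega2_notMem_C1 (α : Ordinal) : ∃ γ < Omega2, γ ∉ C1 α := by
  by_contra! h
  have hΩ₂ : #(Set.Iio Omega2) = ℵ_ 2 := by
    rw [Cardinal.mk_Iio_ordinal, Omega2, card_ord, lift_aleph, Ordinal.lift_ofNat]
  have hle : ℵ_ 2 ≤ ℵ₁ := hΩ₂ ▸ (mk_le_mk_of_subset h).trans (mk_C1_le α)
  exact hle.not_gt (aleph_lt_aleph.2 one_lt_two)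

theorem psi1_notMem_C1 (α : Ordinal) : psi1 α ∉ C1 α :=
  have ⟨γ, _, hγ⟩ := exists_lt_Omega2_notMem_C1 α
  csInf_mem (s := {γ : Ordinal | γ ∉ C1 α}) ⟨γ, hγ⟩

theorem psi1_lt_Omega2 (α : Ordinal) : psi1 α < Omega2 :=
  have ⟨_, hγΩ, hγ⟩ := exists_lt_Omega2_notMem_C1 α
  (csInf_le' hγ).trans_lt hγΩ

theorem mem_C1_of_lt_psi1 {α β : Ordinal} (h : β < psi1 α) : β ∈ C1 α :=
  not_not.1 fun hβ => notMem_of_lt_csInf' h hβ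

theorem le_psi1 {α γ : Ordinal} (h : ∀ β < γ, β ∈ C1 α) : γ ≤ psi1 α :=
  not_lt.1 fun hlt => psi1_notMem_C1 α (h _ hlt)

theorem Omega1_le_psi1 (α : Ordinal) : Omega1 ≤ psi1 α :=
  le_psi1 (isC1Closed_C1 α).mem_of_lt_Omega1

theorem psi1_mono : Monotone psi1 := fun _ _ hαβ =>
  le_psi1 fun _ hγ => C1_mono hαβ (mem_C1_of_lt_psi1 hγ)

theorem psi1_lt_psi1 {α β : Ordinal} (hβα : β < α) (hβ : β ∈ C1 β) : psi1 β < psi1 α := by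
  have hmem : psi1 β ∈ C1 α := (isC1Closed_C1 α).psi1_mem β (C1_mono hβα.le hβ) hβα hβ
  exact (psi1_mono hβα.le).lt_of_ne fun h => psi1_notMem_C1 α (h ▸ hmem)

theorem addPrincipal_psi1 (α : Ordinal) : AddPrincipal (psi1 α) := by
  obtain ⟨l, hl, hsum⟩ := exists_list_addPrincipal_sum_eq (psi1 α)
  by_contra hψ
  have hne : l ≠ [] := by
    rintro rfl
    exact (Omega1_pos.trans_le (Omega1_le_psi1 α)).ne hsum
  have hmem : ∀ b ∈ l, b ∈ C1 α := fun b hb =>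
    mem_C1_of_lt_psi1 <| (hsum ▸ List.le_sum_of_mem hb).lt_of_ne fun h => hψ (h ▸ hl b hb)
  exact psi1_notMem_C1 α <| hsum ▸
    (isC1Closed_C1 α).sum_mem l hne fun b hb => ⟨hmem b hb, hl b hb⟩

theorem lt_of_mem_C1 {α γ : Ordinal} (hΩ : Omega1 ≤ γ) (hγ : AddPrincipal γ)
    (hψ : ∀ β < α, β ∈ C1 β → (β < Omega2 → β < γ) → psi1 β < γ) {x : Ordinal} (hx : x ∈ C1 α)
    (hx₂ : x < Omega2) : x < γ := by
  have hclosed : IsC1Closed α {x | x < Omega2 → x < γ} :=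
    { mem_of_lt_Omega1 := fun β hβ _ => hβ.trans_le hΩ
      psi2_mem := fun β _ hβ => absurd hβ (Omega2_le_psi2 β).not_gt
      sum_mem := fun l _ hl hsum =>
        hγ.sum_lt fun b hb => (hl b hb).1 ((List.le_sum_of_mem hb).trans_lt hsum)
      psi1_mem := fun β hβγ hβα hβ _ => hψ β hβα hβ hβγ }
  exact hclosed.C1_subset hx hx₂

theorem psi1_le_of_forall_lt {α γ : Ordinal} (hΩ : Omega1 ≤ γ) (hγ : AddPrincipal γ)
    (hψ : ∀ β < α, β ∈ C1 β → (β < Omega2 → β < γ) → psi1 β < γ) : psi1 α ≤ γ :=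
  not_lt.1 fun h => (lt_of_mem_C1 hΩ hγ hψ (mem_C1_of_lt_psi1 h) (h.trans (psi1_lt_Omega2 α))).false

theorem lt_psi1_iff {α β : Ordinal} : β < psi1 α ↔ β ∈ C1 α ∧ β < Omega2 :=
  ⟨fun h => ⟨mem_C1_of_lt_psi1 h, h.trans (psi1_lt_Omega2 α)⟩, fun ⟨hβ, hβ₂⟩ =>
    lt_of_mem_C1 (Omega1_le_psi1 α) (addPrincipal_psi1 α)
      (fun _ hγα hγ _ => psi1_lt_psi1 hγα hγ) hβ hβ₂⟩

theorem psi1_zero : psi1 0 = Omega1 :=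
  (psi1_le_of_forall_lt le_rfl addPrincipal_Omega1 fun _ hβ => absurd hβ not_lt_zero).antisymm
    (Omega1_le_psi1 0)

theorem psi1_add_one {α : Ordinal} (hα : α ∈ C1 α) : psi1 (α + 1) = psi1 α * ω := by
  have hlt : psi1 α < psi1 α * ω :=
    lt_mul_of_one_lt_right (pos_iff_ne_zero.2 (addPrincipal_psi1 α).1) one_lt_omega0
  apply le_antisymm
  · exact psi1_le_of_forall_lt ((Omega1_le_psi1 α).trans hlt.le) (addPrincipal_psi1 α).mul_omega0
      fun β hβ _ _ => (psi1_mono (Order.lt_add_one_iff.1 hβ)).trans_lt hlt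
  · exact (addPrincipal_psi1 (α + 1)).mul_omega0_le (psi1_lt_psi1 (lt_add_one α) hα)

theorem psi1_eq_opow_of_forall_lt {α : Ordinal} (hα : ∀ β < α, β ∈ C1 β) :
    psi1 α = ω ^ (Omega1 + α) := by
  induction α using WellFoundedLT.induction with
  | ind α ih =>
    have hpsi : ∀ β < α, psi1 β = ω ^ (Omega1 + β) := fun β hβ =>
      ih β hβ fun γ hγ => hα γ (hγ.trans hβ)
    apply le_antisymm
    · refine psi1_le_of_forall_lt (le_self_add.trans (right_le_opow _ one_lt_omega0))
        (addPrincipal_omega0_opow _) fun β hβ _ _ => ?_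
      rw [hpsi β hβ, opow_lt_opow_iff_right one_lt_omega0]
      gcongr
    · obtain ⟨δ, hδ⟩ := (addPrincipal_psi1 α).exists_omega0_opow_eq
      rw [← hδ, opow_le_opow_iff_right one_lt_omega0]
      rcases eq_or_ne α 0 with rfl | hα₀
      · rw [add_zero, ← opow_le_opow_iff_right one_lt_omega0, hδ, omega0_opow_Omega1]
        exact Omega1_le_psi1 0
      · refine (add_le_iff hα₀).2 fun β hβ => ?_
        rw [← opow_lt_opow_iff_right one_lt_omega0, hδ, ← hpsi β hβ]
        exact psi1_lt_psi1 hβ (hα β hβ)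

theorem psi1_eq_of_psi1_le {β γ : Ordinal} (hβ : psi1 β ≤ β) (hβγ : β ≤ γ) (hγ : γ ≤ Omega2) :
    psi1 γ = psi1 β := by
  refine le_antisymm ?_ (psi1_mono hβγ)
  refine psi1_le_of_forall_lt (Omega1_le_psi1 β) (addPrincipal_psi1 β) fun δ hδγ hδ hδβ => ?_
  exact psi1_lt_psi1 ((hδβ (hδγ.trans_le hγ)).trans_le hβ) hδ

theorem mem_C1_self_of_lt {α β : Ordinal} (hα : α ∈ C1 α) (hα₂ : α < Omega2) (hβ : β < α) :
    β ∈ C1 β := by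
  apply mem_C1_of_lt_psi1
  by_contra! hle
  have hconst : psi1 α = psi1 β := psi1_eq_of_psi1_le hle hβ.le hα₂.le
  exact (lt_psi1_iff.2 ⟨hα, hα₂⟩).not_ge (hconst.trans_le (hle.trans hβ.le))

theorem psi1_eq_opow {α : Ordinal} (hα : α ∈ C1 α) (hα₂ : α < Omega2) :
    psi1 α = ω ^ (Omega1 + α) :=
  psi1_eq_opow_of_forall_lt fun _ hβ => mem_C1_self_of_lt hα hα₂ hβ

theorem mem_C1_self_of_forall_lt_opow {γ : Ordinal} (h : ∀ α < γ, α < ω ^ (Omega1 + α)) :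
    ∀ α < γ, α ∈ C1 α := by
  intro α
  induction α using WellFoundedLT.induction with
  | ind α ih =>
    intro hα
    apply mem_C1_of_lt_psi1
    rw [psi1_eq_opow_of_forall_lt fun β hβ => ih β hβ (hβ.trans hα)]
    exact h α hα

theorem psi1_Omega2 : psi1 Omega2 = sInf {ξ : Ordinal | Omega1 < ξ ∧ ω ^ ξ = ξ} := by
  simp_rw [← omega0_opow_add_eq_iff]
  set ε := sInf {ξ : Ordinal | ω ^ (Omega1 + ξ) = ξ}
  have hΩ₂ : ω ^ (Omega1 + Omega2) = Omega2 :=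
    omega0_opow_add_eq_iff.2 ⟨Omega1_lt_Omega2, omega0_opow_Omega2⟩
  have hεΩ₂ : ε ≤ Omega2 := csInf_le' hΩ₂
  have hfix : ω ^ (Omega1 + ε) = ε :=
    csInf_mem (s := {ξ : Ordinal | ω ^ (Omega1 + ξ) = ξ}) ⟨_, hΩ₂⟩
  have hlt : ∀ α < ε, α < ω ^ (Omega1 + α) := fun α hα =>
    (le_add_self.trans (right_le_opow _ one_lt_omega0)).lt_of_ne' fun h =>
      notMem_of_lt_csInf' (s := {ξ : Ordinal | ω ^ (Omega1 + ξ) = ξ}) hα h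
  have hψε : psi1 ε = ε :=
    (psi1_eq_opow_of_forall_lt (mem_C1_self_of_forall_lt_opow hlt)).trans hfix
  rw [psi1_eq_of_psi1_le hψε.le hεΩ₂ le_rfl, hψε]

/-- Properties of the function `ψ₁`. -/
theorem psi1_properties :
    (∀ α : Ordinal, psi1 α < Omega2) ∧
    (psi1 0 = Omega1) ∧
    (∀ α : Ordinal, α ∈ C1 α → psi1 (α + 1) = psi1 α * omega0) ∧
    (∀ α : Ordinal, α ∈ C1 α → α < Omega2 → psi1 α = omega0 ^ (Omega1 + α)) ∧
    (psi1 Omega2 = sInf {ξ : Ordinal | Omega1 < ξ ∧ omega0 ^ ξ = ξ}) ∧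
    (∀ α β : Ordinal, β < psi1 α ↔ β ∈ C1 α ∧ β < Omega2) := by
  exact ⟨psi1_lt_Omega2, psi1_zero, fun _ hα => psi1_add_one hα,
    fun _ hα hα₂ => psi1_eq_opow hα hα₂, psi1_Omega2, fun _ _ => lt_psi1_iff⟩

end
end

section
/- Let Λ be an ordinal equipped with a system of fundamental sequences satisfying the Bachmann property, and let (ξₙ)ₙ∈ℕ be a sequence of ordinals below Λ such that ξₙ[n+1] ≤ ξₙ₊₁ ≤ ξₙ for all n. Then for all n, ξₙ ≥ ξ₀[0][1]⋯[n], the ordinal obtained from ξ₀ by successively applying the fundamental sequence at indices 0, 1, …, n. -/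
/-!
Write `a →ₙ b` if `b` is obtained from `a` by repeatedly applying `· [n]`. By the Bachmann property
and well-foundedness, every `b` with `a[k] ≤ b ≤ a` satisfies `b →ₘ a[k]` as soon as `m ≥ max k 1`:
a step `b ↦ b[m]` cannot jump over `a[k]`. Hence `→ₙ` implies `→ₘ` whenever `m ≥ max n 1`.

The inequality `ξₙ ≥ ξ₀[0]⋯[n]` is strengthened to `ξₙ →ₙ₊₁ ξ₀[0]⋯[n]`, which can be proved by
induction: if `ξₙ →ₙ₊₁ o`, then `ξₙ₊₁ →ₙ₊₂ ξₙ[n+1] →ₙ₊₁ o[n+1]`, where the last relation holds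
because the map `· [n+1]` commutes with itself.
-/

section

variable {α β : Type*}

/-- `Descends f n a b` is the relation `a →ₙ b`: `b` is one of `a`, `a[n]`, `a[n][n]`, …, where
`x[n]` is `f x n`. -/
def Descends (f : α → ℕ → α) (n : ℕ) : α → α → Prop :=
  Relation.ReflTransGen fun a b => f a n = b

/-- The element `a[0][1]⋯[n]`, where `x[i]` is `f x i`. -/
def fundamentalIterate (f : α → ℕ → α) (a : α) (n : ℕ) : α :=
  Nat.rec (motive := fun _ => α) (f a 0) (fun i b => f b (i + 1)) n

/-- Systems of fundamental sequences on an arbitrary preorder, with `f a n` in the role of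
`a[n]`. The minimal elements replace the ordinal `0` as the only possible fixed points. -/
structure IsFundamentalSystem [Preorder α] (f : α → ℕ → α) : Prop where
  le : ∀ a n, f a n ≤ a
  lt_of_not_isMin : ∀ a n, ¬IsMin a → f a n < a
  monotone : ∀ a, Monotone (f a)

/-- The Bachmann property, with `f a n` in the role of `a[n]`: elements `b`
strictly between `a[k]` and `a` satisfy `a[k] ≤ b[1]`. -/
def HasBachmannProperty [Preorder α] (f : α → ℕ → α) : Prop :=
  ∀ ⦃a b : α⦄ ⦃k : ℕ⦄, f a k < b → b < a → f a k ≤ f b 1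

theorem map_fundamentalIterate {f : α → ℕ → α} {g : β → ℕ → β} {φ : α → β}
    (hφ : ∀ a n, φ (f a n) = g (φ a) n) (a : α) (n : ℕ) :
    φ (fundamentalIterate f a n) = fundamentalIterate g (φ a) n := by
  induction n with
  | zero => exact hφ a 0
  | succ n ih => exact (hφ _ _).trans (congrArg (g · (n + 1)) ih)

namespace Descends

variable {f : α → ℕ → α} {n : ℕ} {a b : α}

theorem le [Preorder α] (hf : ∀ a n, f a n ≤ a) (h : Descends f n a b) : b ≤ a := by
  induction h with
  | refl => exact le_rfl
  | tail _ hstep ih => exact hstep ▸ (hf _ n).trans ih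

theorem apply (h : Descends f n a b) : Descends f n (f a n) (f b n) :=
  Relation.ReflTransGen.lift (p := fun x y => f x n = y) (f · n)
    (fun _ _ hstep => congrArg (f · n) hstep) _ _ h

theorem of_le [PartialOrder α] [WellFoundedLT α] (hba : b ≤ a)
    (hstep : ∀ x, b < x → x ≤ a → b ≤ f x n ∧ f x n < x) : Descends f n a b := by
  induction a using WellFoundedLT.induction with
  | ind a ih =>
    obtain rfl | hlt := hba.eq_or_lt
    · exact Relation.ReflTransGen.refl
    · obtain ⟨hb, ha⟩ := hstep a hlt le_rfl
      exact .head rfl (ih _ ha hb fun x hbx hx => hstep x hbx (hx.trans ha.le))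

end Descends

namespace IsFundamentalSystem

variable [PartialOrder α] {f : α → ℕ → α} {a b : α} {k m n : ℕ}

theorem apply_le_apply (hf : IsFundamentalSystem f) (hB : HasBachmannProperty f)
    (hm : 1 ≤ m) (hkm : k ≤ m) (hkb : f a k < b) (hba : b ≤ a) : f a k ≤ f b m := by
  obtain rfl | hlt := hba.eq_or_lt
  · exact hf.monotone b hkm
  · exact (hB hkb hlt).trans (hf.monotone b hm)

variable [WellFoundedLT α]

theorem descends_of_mem_Icc (hf : IsFundamentalSystem f) (hB : HasBachmannProperty f)
    (hm : 1 ≤ m) (hkm : k ≤ m) (hb : b ∈ Set.Icc (f a k) a) : Descends f m b (f a k) :=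
  .of_le hb.1 fun x hkx hxb =>
    ⟨hf.apply_le_apply hB hm hkm hkx (hxb.trans hb.2), hf.lt_of_not_isMin x m hkx.not_isMin⟩

theorem descends_mono (hf : IsFundamentalSystem f) (hB : HasBachmannProperty f)
    (hm : 1 ≤ m) (hnm : n ≤ m) (h : Descends f n a b) : Descends f m a b := by
  induction h with
  | refl => exact Relation.ReflTransGen.refl
  | tail _ hstep ih =>
    subst hstep
    exact ih.trans (hf.descends_of_mem_Icc hB hm hnm ⟨hf.le _ n, le_rfl⟩)

theorem descends_fundamentalIterate (hf : IsFundamentalSystem f) (hB : HasBachmannProperty f)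
    {ξ : ℕ → α} (hξ : ∀ n, ξ (n + 1) ∈ Set.Icc (f (ξ n) (n + 1)) (ξ n)) (n : ℕ) :
    Descends f (n + 1) (ξ n) (fundamentalIterate f (ξ 0) n) := by
  induction n with
  | zero => exact hf.descends_of_mem_Icc hB le_rfl zero_le_one ⟨hf.le _ 0, le_rfl⟩
  | succ n ih =>
    have descends_apply : Descends f (n + 2) (ξ (n + 1)) (f (ξ n) (n + 1)) :=
      hf.descends_of_mem_Icc hB (by omega) (by omega) (hξ n)
    exact descends_apply.trans (hf.descends_mono hB (by omega) (by omega) ih.apply)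

end IsFundamentalSystem

theorem descent_majorizes_fundamental_iterates_general [PartialOrder α] [WellFoundedLT α]
    {f : α → ℕ → α} (hf : IsFundamentalSystem f) (hB : HasBachmannProperty f)
    {ξ : ℕ → α} (hξ : ∀ n, ξ (n + 1) ∈ Set.Icc (f (ξ n) (n + 1)) (ξ n)) (n : ℕ) :
    fundamentalIterate f (ξ 0) n ≤ ξ n :=
  (hf.descends_fundamentalIterate hB hξ n).le hf.le

end

/-- If `Λ` carries a system of fundamental sequences `fs` satisfying the Bachmann
property, and `(ξ n)` is a sequence of ordinals below `Λ` with
`fs (ξ n) (n+1) ≤ ξ (n+1) ≤ ξ n` for all `n`, then for every `n` the ordinal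
`ξ₀[0][1]⋯[n]` (obtained from `ξ 0` by successively applying the fundamental
sequence at indices `0, 1, …, n`) is `≤ ξ n`. -/
theorem descent_majorizes_fundamental_iterates
    (Λ : Ordinal) (fs : Ordinal → ℕ → Ordinal)
    (h_lt : ∀ α, α < Λ → ∀ n, fs α n < Λ)
    (h_le : ∀ α, α < Λ → ∀ n, fs α n ≤ α)
    (h_eq : ∀ α, α < Λ → ∀ n, (fs α n = α ↔ α = 0))
    (h_mono : ∀ α, α < Λ → ∀ n m : ℕ, n ≤ m → fs α n ≤ fs α m)
    (h_bachmann : ∀ α β : Ordinal, α < Λ → β < Λ → ∀ k : ℕ,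
      fs α k < β → β < α → fs α k ≤ fs β 1)
    (ξ : ℕ → Ordinal) (hξ : ∀ n, ξ n < Λ)
    (h_step : ∀ n, fs (ξ n) (n + 1) ≤ ξ (n + 1) ∧ ξ (n + 1) ≤ ξ n) :
    ∀ n : ℕ,
      (Nat.rec (motive := fun _ => Ordinal) (fs (ξ 0) 0)
        (fun n ih => fs ih (n + 1)) n) ≤ ξ n := by
  let f : Set.Iio Λ → ℕ → Set.Iio Λ := fun a n => ⟨fs a n, h_lt a a.2 n⟩
  have hf : IsFundamentalSystem f :=
    { le := fun a n => h_le a a.2 n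
      lt_of_not_isMin := fun a n ha => lt_of_le_of_ne (h_le a a.2 n) fun h =>
        ha fun b _ => ((h_eq a a.2 n).1 (congrArg Subtype.val h)).trans_le (zero_le (a := b.1))
      monotone := fun a n m hnm => h_mono a a.2 n m hnm }
  have hB : HasBachmannProperty f := fun a b k => h_bachmann a b a.2 b.2 k
  intro n
  have coe_iterate := map_fundamentalIterate (f := f) (g := fs) (φ := Subtype.val)
    (fun _ _ => rfl) ⟨ξ 0, hξ 0⟩ n
  exact coe_iterate.symm.trans_le <|
    descent_majorizes_fundamental_iterates_general hf hB (ξ := fun i => ⟨ξ i, hξ i⟩) h_step n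
end
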